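/- arXiv:1309.6603 — 5 statements merged into one kernel-verified Lean document; each statement's English description precedes it below -/
import Mathlib

section
/- Let B : ℕ → ℝ be a nondecreasing function with B(0) = B(1) = 0 and B(2) ≥ 2. Suppose that for every integer n ≥ 2 there exist an integer k ≥ 2 and a probability distribution p on the finite set {α ∈ ℕ^k : α₁ + ⋯ + α_k = n} such that B(n) ≥ n·log₂ k + Σ_α p(α)·(Σ_{i=1}^k B(α_i)). Then B(n) ≥ n·log₂ n for all n ≥ 2. -/
/-!
Strong induction on `n`. Suppose `B n < n log₂ n`, and let `k`, `p` be the data of the recursive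
inequality at `n`. Every split `α` of `n` into `k` parts then satisfies
`B n - n log₂ k < ∑ i, B (α i)`: if some part equals `n`, the right-hand side is at least `B n`
while `log₂ k > 0`; otherwise all parts are smaller than `n`, and the induction hypothesis with the
convexity of `x log x` (`sum_mul_logb_ge`) bounds it below by `n log₂ n - n log₂ k`. Averaging
this strict inequality over `p` contradicts the recursive inequality.
-/

/-- Tangent line inequality for the convex function `x ↦ x log x` at the point `t`. -/
lemma tangent_mul_log (m : ℕ) (t : ℝ) (ht : 0 < t) :
    (m : ℝ) * Real.log t + (m - t) ≤ m * Real.log m := by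
  rcases Nat.eq_zero_or_pos m with rfl | hm
  · simp [ht.le]
  · have hm' : (0 : ℝ) < m := by exact_mod_cast hm
    have h := Real.log_le_sub_one_of_pos (div_pos ht hm')
    rw [Real.log_div ht.ne' hm'.ne'] at h
    have h2 := mul_le_mul_of_nonneg_left h hm'.le
    have h3 : (m : ℝ) * (t / m - 1) = t - m := by field_simp
    rw [h3] at h2
    linarith

/-- Jensen's inequality for `x log₂ x`, obtained by summing the tangent line inequality at the
mean `n / k`. -/
lemma sum_mul_logb_ge (k n : ℕ) (hk : 0 < k) (hn : 0 < n) (α : Fin k → ℕ)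
    (hα : ∑ i, α i = n) :
    (n : ℝ) * Real.logb 2 n - n * Real.logb 2 k ≤ ∑ i, (α i : ℝ) * Real.logb 2 (α i) := by
  have hk' : (0 : ℝ) < k := by exact_mod_cast hk
  have hn' : (0 : ℝ) < n := by exact_mod_cast hn
  have hα' : ∑ i, (α i : ℝ) = n := by exact_mod_cast hα
  have h := Finset.sum_le_sum fun i (_ : i ∈ Finset.univ) =>
    tangent_mul_log (α i) ((n : ℝ) / k) (div_pos hn' hk')
  rw [Finset.sum_add_distrib, Finset.sum_sub_distrib, ← Finset.sum_mul, hα', Finset.sum_const,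
    Finset.card_univ, Fintype.card_fin, nsmul_eq_mul, mul_div_cancel₀ _ hk'.ne',
    Real.log_div hn'.ne' hk'.ne'] at h
  have h2 : (0 : ℝ) < Real.log 2 := Real.log_pos (by norm_num)
  simp only [Real.logb, ← mul_div_assoc]
  rw [← Finset.sum_div, ← sub_div]
  exact div_le_div_of_nonneg_right (by linarith) h2.le

/-- Abstract core of the random-bit lower bound: if `B` is nondecreasing with
`B 0 = B 1 = 0`, `B 2 ≥ 2`, and satisfies the one-round recursive inequality
(for some number of destinations `k ≥ 2` and some probability distribution on
the ways to split `n` robots among the `k` destinations), then `B n ≥ n log₂ n`. -/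
theorem stmt_0 (B : ℕ → ℝ) (hmono : Monotone B) (hB0 : B 0 = 0) (hB1 : B 1 = 0)
    (hB2 : 2 ≤ B 2)
    (hrec : ∀ n : ℕ, 2 ≤ n → ∃ k : ℕ, 2 ≤ k ∧ ∃ p : (Fin k → ℕ) → ℝ,
      (∀ α ∈ Finset.Nat.antidiagonalTuple k n, 0 ≤ p α) ∧
      (∑ α ∈ Finset.Nat.antidiagonalTuple k n, p α = 1) ∧
      (n : ℝ) * Real.logb 2 k +
        ∑ α ∈ Finset.Nat.antidiagonalTuple k n, p α * (∑ i, B (α i)) ≤ B n) :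
    ∀ n : ℕ, 2 ≤ n → (n : ℝ) * Real.logb 2 n ≤ B n := by
  intro n
  induction n using Nat.strong_induction_on with
  | _ n ih =>
  intro hn
  by_contra hlt
  push Not at hlt
  obtain ⟨k, hk, p, hp0, hp1, hle⟩ := hrec n hn
  have hBnn : ∀ m, 0 ≤ B m := fun m => hB0 ▸ hmono (Nat.zero_le m)
  have hlogk : 0 < (n : ℝ) * Real.logb 2 k :=
    mul_pos (by exact_mod_cast (by omega : 0 < n))
      (Real.logb_pos (by norm_num) (by exact_mod_cast (by omega : 1 < k)))
  have key : ∀ α ∈ Finset.Nat.antidiagonalTuple k n,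
      0 < (∑ i, B (α i)) - (B n - n * Real.logb 2 k) := by
    intro α hα
    rw [Finset.Nat.mem_antidiagonalTuple] at hα
    by_cases hc : ∃ i, α i = n
    · obtain ⟨i, hi⟩ := hc
      have h := Finset.single_le_sum (f := fun i => B (α i)) (fun j _ => hBnn (α j))
        (Finset.mem_univ i)
      simp only [hi] at h
      linarith
    · push Not at hc
      have hJ := sum_mul_logb_ge k n (by omega) (by omega) α hα
      have hS : ∑ i, (α i : ℝ) * Real.logb 2 (α i) ≤ ∑ i, B (α i) := by
        refine Finset.sum_le_sum fun i _ => ?_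
        have hi : α i < n := lt_of_le_of_ne
          (hα ▸ Finset.single_le_sum (fun j _ => Nat.zero_le (α j)) (Finset.mem_univ i)) (hc i)
        rcases Nat.lt_or_ge (α i) 2 with h2 | h2
        · have h01 : α i = 0 ∨ α i = 1 := by omega
          rcases h01 with h | h <;> simp [h, hB0, hB1]
        · exact ih _ hi h2
      linarith
  have hnn : ∀ α ∈ Finset.Nat.antidiagonalTuple k n,
      0 ≤ p α * ((∑ i, B (α i)) - (B n - n * Real.logb 2 k)) :=
    fun α hα => mul_nonneg (hp0 α hα) (key α hα).le
  have hsum : ∑ α ∈ Finset.Nat.antidiagonalTuple k n,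
      p α * ((∑ i, B (α i)) - (B n - n * Real.logb 2 k)) = 0 := by
    refine le_antisymm ?_ (Finset.sum_nonneg hnn)
    simp only [mul_sub (p _) (∑ i, B _)]
    rw [Finset.sum_sub_distrib, ← Finset.sum_mul, hp1]
    linarith
  -- A vanishing sum of nonnegative terms with positive second factors forces `p = 0`.
  have hz := (Finset.sum_eq_zero_iff_of_nonneg hnn).1 hsum
  have hp : ∑ α ∈ Finset.Nat.antidiagonalTuple k n, p α = 0 :=
    Finset.sum_eq_zero fun α hα =>
      (mul_eq_zero.1 (hz α hα)).resolve_right (key α hα).ne'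
  linarith
end

section
/- For all integers A ≥ 1 and K ≥ 1, setting ξ = 1 − 1/(K+1), there exists an integer N (depending only on A and K) such that for every n ≥ N and every integer k with 2 ≤ k ≤ A·n^K, the following holds: for a uniformly random assignment of n balls into k bins, the probability that the maximum load exceeds (n/k)·(1 + k^ξ) is at most 1/2. -/
/-!
The bound follows from Markov's inequality applied to the third binomial moment of the loads.

Summed over all assignments `f` and bins `j`, the quantity `C(load_j, 3)` counts triples of balls
lying together in bin `j`, so the total is `k · C(n,3) · k^(n-3)` (`sum_choose_load`). Put
`T = (n/k)(1 + k^ξ)`. If the maximum load exceeds `T` and `T ≥ 20`, then the sum over `j` for this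
`f` is at least `0.729 T³ / 6`, so the proportion of such `f` is at most
`n³ / (0.729 T³ k²) = k / (0.729 (1 + k^ξ)³)`.
With `y = k^(1/(K+1))` we have `k^ξ = k / y` and `y² ≤ k` (as `K ≥ 1`), hence
`(1 + k^ξ)³ ≥ 3 (k/y)² ≥ 3k`, and `1 / (3 · 0.729) ≤ 1/2`.
Finally `T ≥ n / y ≥ 20` as soon as `n ≥ A · 20^(K+1)`, because `k ≤ A n^K`.
-/

/-- The maximum load of an assignment `f` of balls (elements of `Fin n`) into bins
(elements of `Fin k`): the largest number of balls landing in a single bin. -/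
def maxLoad {n k : ℕ} (f : Fin n → Fin k) : ℕ :=
  Finset.univ.sup fun j : Fin k => (Finset.univ.filter fun i : Fin n => f i = j).card

/-- The number of assignments sending every ball of `S` to the bin `j`. -/
lemma card_const_on {n k : ℕ} (S : Finset (Fin n)) (j : Fin k) :
    (Finset.univ.filter fun f : Fin n → Fin k => ∀ i ∈ S, f i = j).card = k ^ (n - S.card) := by
  have h : (Finset.univ.filter fun f : Fin n → Fin k => ∀ i ∈ S, f i = j)
      = Fintype.piFinset fun i => if i ∈ S then {j} else Finset.univ := by
    ext f
    simp only [Finset.mem_filter, Finset.mem_univ, true_and, Fintype.mem_piFinset]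
    refine forall_congr' fun i => ?_
    by_cases hi : i ∈ S <;> simp [hi]
  rw [h, Fintype.card_piFinset]
  have h2 : ∀ i : Fin n, (if i ∈ S then ({j} : Finset (Fin k)) else Finset.univ).card
      = if i ∈ S then 1 else k := by
    intro i
    by_cases hi : i ∈ S <;> simp [hi]
  simp only [h2]
  rw [Finset.prod_ite]
  have h3 : (Finset.univ.filter fun i => i ∉ S) = Sᶜ := by
    ext i; simp
  simp [h3, Finset.card_compl]

/-- Third binomial moment of the loads, obtained by counting triples of balls sharing a bin. -/
lemma sum_choose_load (n k : ℕ) :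
    ∑ f : Fin n → Fin k, ∑ j : Fin k,
      ((Finset.univ.filter fun i : Fin n => f i = j).card).choose 3
      = k * (n.choose 3 * k ^ (n - 3)) := by
  have h1 : ∀ (f : Fin n → Fin k) (j : Fin k),
      ((Finset.univ.filter fun i : Fin n => f i = j).card).choose 3
      = ∑ S ∈ Finset.powersetCard 3 (Finset.univ : Finset (Fin n)),
          if ∀ i ∈ S, f i = j then 1 else 0 := by
    intro f j
    rw [← Finset.card_powersetCard, ← Finset.card_filter]
    congr 1
    ext S
    simp only [Finset.mem_powersetCard, Finset.mem_filter, Finset.subset_iff, Finset.mem_univ,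
      true_and, implies_true]
    tauto
  simp only [h1]
  rw [Finset.sum_comm]
  have h2 : ∀ j : Fin k, ∑ f : Fin n → Fin k,
      (∑ S ∈ Finset.powersetCard 3 (Finset.univ : Finset (Fin n)),
          if ∀ i ∈ S, f i = j then 1 else 0) = n.choose 3 * k ^ (n - 3) := by
    intro j
    rw [Finset.sum_comm]
    have : ∀ S ∈ Finset.powersetCard 3 (Finset.univ : Finset (Fin n)),
        (∑ f : Fin n → Fin k, if ∀ i ∈ S, f i = j then 1 else 0) = k ^ (n - 3) := by
      intro S hS
      rw [← Finset.card_filter, card_const_on, (Finset.mem_powersetCard.1 hS).2]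
    rw [Finset.sum_congr rfl this]
    simp
  rw [Finset.sum_congr rfl fun j _ => h2 j]
  simp

lemma choose_three_cast (m : ℕ) :
    ((m.choose 3 : ℕ) : ℝ) = (m : ℝ) * (m - 1) * (m - 2) / 6 := by
  rw [Nat.cast_choose_eq_ascPochhammer_div]
  rcases m with _ | _ | m
  · simp [ascPochhammer_succ_left]
  · simp [ascPochhammer_succ_left]
  · have : (m + 1 + 1) - (3 - 1) = m := by omega
    simp [ascPochhammer_succ_left, this, Nat.factorial]
    ring

/-- Markov's inequality for the third binomial moment, for thresholds `T ≥ 20`, where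
`C(m, 3) ≥ (0.9 m)³ / 6` for every integer `m > T`. -/
lemma card_maxLoad_gt (n k : ℕ) (hn : 3 ≤ n) (T : ℝ) (hT : 20 ≤ T) :
    ((Finset.univ.filter fun f : Fin n → Fin k => T < (maxLoad f : ℝ)).card : ℝ)
      * (0.729 * T ^ 3) * k ^ 2 ≤ (n : ℝ) ^ 3 * k ^ n := by
  have key : ∀ f ∈ (Finset.univ.filter fun f : Fin n → Fin k => T < (maxLoad f : ℝ)),
      0.729 * T ^ 3 / 6 ≤ ((∑ j : Fin k,
        ((Finset.univ.filter fun i : Fin n => f i = j).card).choose 3 : ℕ) : ℝ) := by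
    intro f hf
    have hf : T < (maxLoad f : ℝ) := by simpa using hf
    have hne : (Finset.univ : Finset (Fin k)).Nonempty := ⟨f ⟨0, by omega⟩, Finset.mem_univ _⟩
    obtain ⟨j, -, hj⟩ := Finset.exists_mem_eq_sup _ hne
      (fun j : Fin k => (Finset.univ.filter fun i : Fin n => f i = j).card)
    have h1 : (maxLoad f).choose 3 ≤ ∑ j : Fin k,
        ((Finset.univ.filter fun i : Fin n => f i = j).card).choose 3 := by
      unfold maxLoad
      rw [hj]
      exact Finset.single_le_sum
        (f := fun j : Fin k => ((Finset.univ.filter fun i : Fin n => f i = j).card).choose 3)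
        (fun _ _ => Nat.zero_le _) (Finset.mem_univ j)
    have h2 : (((maxLoad f).choose 3 : ℕ) : ℝ) ≤ _ := Nat.cast_le.2 h1
    refine le_trans ?_ h2
    rw [choose_three_cast]
    generalize (maxLoad f : ℝ) = m at hf
    have a1 : 0.9 * T ≤ m - 2 := by linarith
    have a2 : 0.9 * T ≤ m - 1 := by linarith
    have a3 : 0.9 * T ≤ m := by linarith
    have a0 : 0 ≤ 0.9 * T := by linarith
    have : (0.9 * T) * (0.9 * T) * (0.9 * T) ≤ m * (m - 1) * (m - 2) := by
      have b0 : 0 ≤ m := by linarith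
      have b1 : 0 ≤ m * (m - 1) := mul_nonneg b0 (by linarith)
      gcongr
    nlinarith
  have h3 := Finset.card_nsmul_le_sum _ _ _ key
  have h4 : (∑ f ∈ (Finset.univ.filter fun f : Fin n → Fin k => T < (maxLoad f : ℝ)),
      ((∑ j : Fin k, ((Finset.univ.filter fun i : Fin n => f i = j).card).choose 3 : ℕ) : ℝ))
      ≤ (k : ℝ) * ((n.choose 3 : ℕ) * k ^ (n - 3)) := by
    have := sum_choose_load n k
    have h5 : ((∑ f : Fin n → Fin k, ∑ j : Fin k,
      ((Finset.univ.filter fun i : Fin n => f i = j).card).choose 3 : ℕ) : ℝ)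
        = ((k * (n.choose 3 * k ^ (n - 3)) : ℕ) : ℝ) := by rw [this]
    rw [Nat.cast_sum] at h5
    push_cast at h5 ⊢
    rw [← h5]
    exact Finset.sum_le_sum_of_subset_of_nonneg (Finset.filter_subset _ _)
      (fun _ _ _ => by positivity)
  have h6 : ((n.choose 3 : ℕ) : ℝ) ≤ (n : ℝ) ^ 3 / 6 := by
    have := Nat.choose_le_pow_div (α := ℝ) 3 n
    simpa [Nat.factorial] using this
  have h7 : (k : ℝ) ^ n = k ^ (n - 3) * k ^ 3 := by
    rw [← pow_add]; congr 1; omega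
  rw [nsmul_eq_mul] at h3
  have h8 := h3.trans (h4.trans (by gcongr :
    (k : ℝ) * ((n.choose 3 : ℕ) * k ^ (n - 3)) ≤ k * ((n : ℝ) ^ 3 / 6 * k ^ (n - 3))))
  rw [h7]
  have h9 := mul_le_mul_of_nonneg_right h8 (by positivity : (0 : ℝ) ≤ 6 * k ^ 2)
  calc _ = _ := ?_
    _ ≤ _ := h9
    _ = _ := by ring
  ring

/-- For all integers `A, K ≥ 1`, with `ξ = 1 − 1/(K+1)`, there is an integer `N`
such that for every `n ≥ N` and every `k` with `2 ≤ k ≤ A·n^K`, a uniformly random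
assignment of `n` balls into `k` bins has maximum load exceeding `(n/k)(1 + k^ξ)`
with probability at most `1/2`. -/
theorem stmt_6 (A K : ℕ) (hA : 1 ≤ A) (hK : 1 ≤ K) :
    ∃ N : ℕ, ∀ n : ℕ, N ≤ n → ∀ k : ℕ, 2 ≤ k → k ≤ A * n ^ K →
      ((Finset.univ.filter fun f : Fin n → Fin k =>
          ((n : ℝ) / k) * (1 + (k : ℝ) ^ ((1 : ℝ) - 1 / ((K : ℝ) + 1))) < (maxLoad f : ℝ)).card : ℝ)
        / (k : ℝ) ^ n ≤ 1 / 2 := by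
  refine ⟨A * 20 ^ (K + 1), fun n hn k hk hkA => ?_⟩
  have hn3 : 3 ≤ n := by
    have : 20 ^ 1 ≤ 20 ^ (K + 1) := Nat.pow_le_pow_right (by norm_num) (by omega)
    nlinarith
  have hk2 : (2 : ℝ) ≤ k := by exact_mod_cast hk
  have hk0 : (0 : ℝ) < k := by linarith
  have hn0 : (0 : ℝ) < n := by exact_mod_cast (by omega : 0 < n)
  obtain ⟨y, hy⟩ : ∃ y : ℝ, y = (k : ℝ) ^ (1 / ((K : ℝ) + 1)) := ⟨_, rfl⟩
  have hy1 : 1 ≤ y := hy ▸ Real.one_le_rpow (by linarith) (by positivity)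
  have hy0 : 0 < y := by linarith
  have hyK : y ^ (K + 1) = k := by
    rw [hy, ← Real.rpow_natCast, ← Real.rpow_mul hk0.le]
    push_cast
    rw [one_div_mul_cancel (by positivity), Real.rpow_one]
  have hy2 : y ^ 2 ≤ k := hyK ▸ pow_le_pow_right₀ hy1 (by omega)
  rw [Real.rpow_sub hk0, Real.rpow_one, ← hy]
  have h20 : 20 * y ≤ n := by
    by_contra! hlt
    have h1 : (n : ℝ) ^ (K + 1) < (20 * y) ^ (K + 1) :=
      pow_lt_pow_left₀ hlt hn0.le (by omega)
    rw [mul_pow, hyK] at h1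
    have h2 : (k : ℝ) ≤ A * n ^ K := by exact_mod_cast hkA
    have h3 : (A : ℝ) * 20 ^ (K + 1) ≤ n := by exact_mod_cast hn
    have h4 : (20 : ℝ) ^ (K + 1) * k ≤ n ^ (K + 1) :=
      calc (20 : ℝ) ^ (K + 1) * k ≤ 20 ^ (K + 1) * (A * n ^ K) := by gcongr
        _ = (A * 20 ^ (K + 1)) * n ^ K := by ring
        _ ≤ n * n ^ K := by gcongr
        _ = n ^ (K + 1) := by ring
    linarith
  have hT : 20 ≤ (n : ℝ) / k * (1 + k / y) := by
    have e : (n : ℝ) / k * (1 + k / y) = n / k + n / y := by field_simp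
    have h1 : 20 ≤ (n : ℝ) / y := by rwa [le_div_iff₀ hy0]
    have h2 : 0 < (n : ℝ) / k := by positivity
    rw [e]; linarith
  have hM := card_maxLoad_gt n k hn3 _ hT
  generalize ((Finset.univ.filter fun f : Fin n → Fin k =>
    (n : ℝ) / k * (1 + k / y) < (maxLoad f : ℝ)).card : ℝ) = B at hM ⊢
  have hx : (3 : ℝ) * k ≤ (1 + k / y) ^ 3 := by
    have hxy : (k : ℝ) ≤ (k / y) ^ 2 := by
      rw [div_pow, le_div_iff₀ (by positivity)]
      nlinarith
    have : 0 < (k : ℝ) / y := by positivity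
    nlinarith [pow_pos this 3]
  by_cases hB : B ≤ 0
  · exact (div_nonpos_of_nonpos_of_nonneg hB (by positivity)).trans (by norm_num)
  push Not at hB
  rw [div_le_iff₀ (by positivity)]
  have h1 : B * (0.729 * ((n : ℝ) ^ 3 / k ^ 3 * (3 * k))) * k ^ 2 ≤ (n : ℝ) ^ 3 * k ^ n := by
    refine le_trans ?_ hM
    rw [mul_pow, div_pow]
    gcongr
  have h2 : B * (0.729 * ((n : ℝ) ^ 3 / k ^ 3 * (3 * k))) * k ^ 2
      = (n : ℝ) ^ 3 * (2.187 * B) := by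
    field_simp
    ring
  rw [h2] at h1
  have h3 := le_of_mul_le_mul_left h1 (by positivity)
  linarith
end

section
/- Let A ≥ 1 and K ≥ 1 be integers. Let W : ℕ × ℕ → ℝ satisfy: W(n,N) ≥ 0 for all n, N; W(0,N) = W(1,N) = 0 for all N; and for every N ≥ 2 and every n with 2 ≤ n ≤ N there exists an integer k with 2 ≤ k ≤ A·N^K such that W(n,N) ≤ n·log₂ k + Σ_{α ∈ ℕ^k, α₁+⋯+α_k = n} (n!/(α₁!⋯α_k!))·k^{−n}·(Σ_{i=1}^k W(α_i, N)). Then for every integer 𝒩 there exists a real R such that for all n ≤ 𝒩 and all N ≥ max(n, 2), W(n,N) ≤ R·log₂ N. -/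
/-!
Only the load vectors that put all `n` balls in one bin reproduce multiplicity `n`, and there are
`k` of them, each of probability `k⁻ⁿ`; for `n, k ≥ 2` their total probability is at most `1/2`
(`sum_loadProb_mul_full`). Every other load vector has at most `n` nonempty bins with loads `< n`,
hence, inductively, cost at most `n * (R * log₂ N)`. The recursion therefore gives
`W n N ≤ n * log₂ k + n * R * log₂ N + W n N / 2`. Solving for `W n N` and using
`log₂ k ≤ (log₂ A + K) * log₂ N` yields a linear bound in `log₂ N` with a constant depending only
on `n`, `A`, `K` and `R`.
-/

/-- Probability that `n` uniform independent balls thrown into `k` bins have load vector `α`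
(meaningful when the entries of `α` sum to `n`). -/
noncomputable def loadProb (k n : ℕ) (α : Fin k → ℕ) : ℝ :=
  ((n.factorial : ℝ) / ∏ i, ((α i).factorial : ℝ)) * ((1 : ℝ) / (k : ℝ) ^ n)

lemma loadProb_nonneg (k n : ℕ) (α : Fin k → ℕ) : 0 ≤ loadProb k n α := by
  unfold loadProb; positivity

/-- The load probabilities sum to one, by the multinomial theorem at `(1, …, 1)`. -/
lemma sum_loadProb (k n : ℕ) (hk : 2 ≤ k) :
    ∑ α ∈ Finset.Nat.antidiagonalTuple k n, loadProb k n α = 1 := by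
  have hset : Finset.Nat.antidiagonalTuple k n = Finset.piAntidiag Finset.univ n := by
    ext α
    simp [Finset.Nat.mem_antidiagonalTuple, Finset.mem_piAntidiag]
  have hm := Finset.sum_pow_eq_sum_piAntidiag (R := ℝ) (Finset.univ : Finset (Fin k))
    (fun _ => (1 : ℝ)) n
  simp only [Finset.sum_const, Finset.card_univ, Fintype.card_fin, nsmul_eq_mul, mul_one,
    one_pow, Finset.prod_const_one] at hm
  have hk0 : (k : ℝ) ≠ 0 := by positivity
  unfold loadProb
  rw [← Finset.sum_mul]
  have : ∑ α ∈ Finset.Nat.antidiagonalTuple k n,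
      ((n.factorial : ℝ) / ∏ i, ((α i).factorial : ℝ)) = (k : ℝ) ^ n := by
    rw [hm, hset]
    refine Finset.sum_congr rfl fun α hα => ?_
    have hs : ∑ i, α i = n := (Finset.mem_piAntidiag.1 hα).1
    have hspec := Nat.multinomial_spec (Finset.univ : Finset (Fin k)) α
    rw [hs] at hspec
    have hp : (∏ i, ((α i).factorial : ℝ)) ≠ 0 :=
      Finset.prod_ne_zero_iff.2 fun i _ => by positivity
    rw [div_eq_iff hp, ← hspec]
    push_cast
    ring
  rw [this]
  field_simp

/-- If bin `i` holds all `n` balls, the load vector is `Pi.single i n`, of probability `k⁻ⁿ`. -/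
lemma sum_loadProb_full (k n : ℕ) (i : Fin k) :
    ∑ α ∈ Finset.Nat.antidiagonalTuple k n, (if α i = n then loadProb k n α else 0)
      = 1 / (k : ℝ) ^ n := by
  rw [Finset.sum_eq_single (Pi.single i n)]
  · simp only [Pi.single_eq_same, if_true, loadProb]
    have : ∏ j, (((Pi.single i n : Fin k → ℕ) j).factorial : ℝ) = n.factorial := by
      rw [Finset.prod_eq_single i]
      · simp
      · intro j _ hj
        simp [hj]
      · simp
    rw [this, div_self (by positivity), one_mul]
  · intro α hα hne
    rw [if_neg]
    intro hi
    apply hne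
    have hs : ∑ j, α j = n := Finset.Nat.mem_antidiagonalTuple.1 hα
    rw [← Finset.add_sum_erase _ _ (Finset.mem_univ i), hi] at hs
    have h0 : ∑ j ∈ Finset.univ.erase i, α j = 0 := by omega
    rw [Finset.sum_eq_zero_iff] at h0
    ext j
    by_cases hj : j = i
    · subst hj; simp [hi]
    · rw [Pi.single_eq_of_ne hj]
      exact h0 j (by simp [hj])
  · intro h
    exact absurd (Finset.Nat.mem_antidiagonalTuple.2 (by simp)) h

/-- The expected number of bins holding all `n` balls is `k^(1-n) ≤ 1/2`; here it is weighted by a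
cost `w ≥ 0`. -/
lemma sum_loadProb_mul_full (k n : ℕ) (hk : 2 ≤ k) (hn : 2 ≤ n) (w : ℝ) (hw : 0 ≤ w) :
    ∑ α ∈ Finset.Nat.antidiagonalTuple k n,
      loadProb k n α * (∑ i, if α i = n then w else 0) ≤ w / 2 := by
  have h1 : ∑ α ∈ Finset.Nat.antidiagonalTuple k n,
      loadProb k n α * (∑ i, if α i = n then w else 0)
      = ∑ i : Fin k, (∑ α ∈ Finset.Nat.antidiagonalTuple k n,
          (if α i = n then loadProb k n α else 0)) * w := by
    simp_rw [Finset.mul_sum, Finset.sum_mul]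
    rw [Finset.sum_comm]
    refine Finset.sum_congr rfl fun i _ => Finset.sum_congr rfl fun α _ => ?_
    split_ifs <;> simp
  rw [h1]
  simp_rw [sum_loadProb_full]
  rw [Finset.sum_const, Finset.card_univ, Fintype.card_fin, nsmul_eq_mul]
  have hk2 : (2 : ℝ) ≤ k := by exact_mod_cast hk
  have hle : (k : ℝ) * (1 / (k : ℝ) ^ n) ≤ 1 / 2 := by
    have hpow : (k : ℝ) ^ 2 ≤ (k : ℝ) ^ n := pow_le_pow_right₀ (by linarith) hn
    rw [mul_one_div, div_le_div_iff₀ (by positivity) (by norm_num)]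
    nlinarith
  calc (k : ℝ) * (1 / (k : ℝ) ^ n * w) = (k : ℝ) * (1 / (k : ℝ) ^ n) * w := by ring
    _ ≤ 1 / 2 * w := by gcongr
    _ = w / 2 := by ring

/-- Base case of the random-bit upper bound: if `W` is nonnegative, vanishes for
multiplicities `0` and `1`, and satisfies the one-round recursion with a number of
destinations `k` with `2 ≤ k ≤ A·N^K`, then for every bound `𝒩` there is a real `R`
such that `W(n,N) ≤ R·log₂ N` for all `n ≤ 𝒩` and all `N ≥ max(n,2)`. -/
theorem stmt_12 (A K : ℕ) (hA : 1 ≤ A) (hK : 1 ≤ K) (W : ℕ → ℕ → ℝ)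
    (hnonneg : ∀ n N : ℕ, 0 ≤ W n N)
    (hW0 : ∀ N : ℕ, W 0 N = 0) (hW1 : ∀ N : ℕ, W 1 N = 0)
    (hrec : ∀ N : ℕ, 2 ≤ N → ∀ n : ℕ, 2 ≤ n → n ≤ N →
      ∃ k : ℕ, 2 ≤ k ∧ k ≤ A * N ^ K ∧
        W n N ≤ (n : ℝ) * Real.logb 2 k +
          ∑ α ∈ Finset.Nat.antidiagonalTuple k n,
            ((n.factorial : ℝ) / ∏ i, ((α i).factorial : ℝ)) * ((1 : ℝ) / (k : ℝ) ^ n) *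
              (∑ i, W (α i) N)) :
    ∀ 𝒩 : ℕ, ∃ R : ℝ, ∀ n N : ℕ, n ≤ 𝒩 → max n 2 ≤ N → W n N ≤ R * Real.logb 2 N := by
  -- Nonnegativity of `R` is carried along so that the constant can be enlarged at each step.
  suffices H : ∀ 𝒩 : ℕ, ∃ R : ℝ, 0 ≤ R ∧
      ∀ n N : ℕ, n ≤ 𝒩 → max n 2 ≤ N → W n N ≤ R * Real.logb 2 N by
    intro 𝒩
    obtain ⟨R, -, h⟩ := H 𝒩
    exact ⟨R, h⟩
  intro 𝒩
  induction 𝒩 with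
  | zero =>
    refine ⟨0, le_rfl, fun n N hn _ => ?_⟩
    obtain rfl : n = 0 := by omega
    simp [hW0]
  | succ m ih =>
    obtain ⟨R, hR, hbound⟩ := ih
    have hlogA : 0 ≤ Real.logb 2 A :=
      Real.logb_nonneg (by norm_num) (by exact_mod_cast hA)
    have hC : 0 ≤ 2 * ((m : ℝ) + 1) * (Real.logb 2 A + K + R) := by positivity
    refine ⟨R + 2 * ((m : ℝ) + 1) * (Real.logb 2 A + K + R), by positivity, ?_⟩
    intro n N hn hN
    have hN2 : 2 ≤ N := le_trans (le_max_right _ _) hN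
    have hnN : n ≤ N := le_trans (le_max_left _ _) hN
    have hL : 1 ≤ Real.logb 2 N := by
      rw [Real.le_logb_iff_rpow_le (by norm_num) (by positivity)]
      simpa using hN2
    set L := Real.logb 2 N with hLdef
    rcases Nat.lt_or_ge m n with hmn | hmn
    swap
    · have := hbound n N hmn hN
      nlinarith
    obtain rfl : n = m + 1 := by omega
    rcases Nat.lt_or_ge (m + 1) 2 with h2 | h2
    · obtain rfl : m = 0 := by omega
      rw [zero_add, hW1]
      positivity
    obtain ⟨k, hk2, hkle, hle⟩ := hrec N hN2 (m + 1) h2 hnN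
    have hlogk : Real.logb 2 k ≤ Real.logb 2 A + K * L := by
      have hA0 : (A : ℝ) ≠ 0 := by positivity
      have hN0 : (N : ℝ) ≠ 0 := by positivity
      rw [hLdef, ← Real.logb_pow, ← Real.logb_mul hA0 (by positivity)]
      exact Real.logb_le_logb_of_le (by norm_num) (by positivity) (by exact_mod_cast hkle)
    have hlogk' : Real.logb 2 k ≤ (Real.logb 2 A + K) * L := by nlinarith
    have hstep : ∑ α ∈ Finset.Nat.antidiagonalTuple k (m + 1),
        loadProb k (m + 1) α * (∑ i, W (α i) N)
        ≤ ((m + 1 : ℕ) : ℝ) * (R * L) + W (m + 1) N / 2 := by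
      calc _ ≤ ∑ α ∈ Finset.Nat.antidiagonalTuple k (m + 1),
            (loadProb k (m + 1) α * (((m + 1 : ℕ) : ℝ) * (R * L)) +
              loadProb k (m + 1) α * (∑ i, if α i = m + 1 then W (m + 1) N else 0)) := by
            refine Finset.sum_le_sum fun α hα => ?_
            rw [← mul_add]
            refine mul_le_mul_of_nonneg_left ?_ (loadProb_nonneg _ _ _)
            have hs : ∑ j, α j = m + 1 := Finset.Nat.mem_antidiagonalTuple.1 hα
            rw [← hs, Nat.cast_sum, Finset.sum_mul, hs, ← Finset.sum_add_distrib]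
            refine Finset.sum_le_sum fun i _ => ?_
            have hRL : 0 ≤ R * L := by positivity
            split_ifs with hi
            · rw [hi]
              have : 0 ≤ ((m + 1 : ℕ) : ℝ) * (R * L) := by positivity
              linarith
            · have hile : α i ≤ m + 1 :=
                hs ▸ Finset.single_le_sum (fun _ _ => Nat.zero_le _) (Finset.mem_univ i)
              rcases Nat.eq_zero_or_pos (α i) with h0 | h0
              · simp [h0, hW0]
              · have h1 : (1 : ℝ) ≤ α i := by exact_mod_cast h0
                have hb := hbound (α i) N (by omega) (by omega)
                nlinarith
        _ ≤ _ := by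
            rw [Finset.sum_add_distrib, ← Finset.sum_mul, sum_loadProb k _ hk2, one_mul]
            gcongr
            exact sum_loadProb_mul_full k _ hk2 h2 _ (hnonneg _ _)
    have hle' : W (m + 1) N ≤ ((m + 1 : ℕ) : ℝ) * Real.logb 2 k +
        (((m + 1 : ℕ) : ℝ) * (R * L) + W (m + 1) N / 2) :=
      hle.trans (by gcongr; exact hstep)
    have hmul : ((m + 1 : ℕ) : ℝ) * Real.logb 2 k
        ≤ ((m + 1 : ℕ) : ℝ) * ((Real.logb 2 A + K) * L) := by gcongr
    have hRL : 0 ≤ R * L := by positivity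
    push_cast at hle' hmul
    nlinarith
end

section
/- Let A ≥ 1 and K ≥ 1 be integers. Let W : ℕ × ℕ → ℝ satisfy: W(n,N) ≥ 0 for all n, N; W(0,N) = W(1,N) = 0 for all N; superadditivity: Σ_{i=1}^k W(α_i, N) ≤ W(n, N) whenever α₁ + ⋯ + α_k = n ≤ N; and for every N ≥ 2 and every n with 2 ≤ n ≤ N there exists an integer k with 2 ≤ k ≤ A·N^K such that W(n,N) ≤ n·log₂ k + Σ_{α ∈ ℕ^k, α₁+⋯+α_k = n} (n!/(α₁!⋯α_k!))·k^{−n}·(Σ_{i=1}^k W(α_i, N)). Then there exist reals R and R' such that for all N ≥ 2 and all n with 2 ≤ n ≤ N, W(n,N) ≤ R·n·log₂ n + R'·n·log₂ N. In particular W(n,n) = O(n·log n). -/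
/-!
Fix `N` and put `L = log₂ N`. The bound `W n N ≤ f n := 4 n log₂ n + D (n - 1) L` with
`D = 4 (log₂ A + K)` is proved by strong induction on `n`. For a load vector `α` of `n` balls in
`k` bins, everything is controlled by the second factorial moment
`E ∑ᵢ αᵢ (αᵢ - 1) = n (n - 1) / k` (`sum_weight_mul_factorial_moment`): if `w m ≤ a m + b m (m - 1)`
for all `m ≤ n`, then `E ∑ᵢ w (αᵢ) ≤ a n + b n (n - 1) / k` (`expect_le_of_quadratic`).

* The vectors with all balls in one bin make the recursion refer to `W n N` itself. Writing
  `W n N = f n + δ`, this contributes at most `δ m (m - 1) / (n (n - 1))` to a bin of load `m`,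
  hence at most `δ / k ≤ δ / 2` in expectation, and `δ ≤ 0` follows once the remaining terms sum to
  at most `f n`.
* If `n ≤ k`, then `m - 1 ≤ m (m - 1) / 2` shows that the `L`-part of the potential drops by
  at least `D (n - 1) L / 2` in expectation, which pays for the cost `n log₂ k ≤ n (log₂ A + K) L`.
* If `k < n`, the tangent to `log₂` at the size-biased mean load `t = 1 + (n - 1) / k` gives
  `E ∑ᵢ αᵢ log₂ αᵢ ≤ n log₂ t`, and the cost is paid for because `k t⁴ ≤ n⁴`.
-/

open Finset in
/-- Multinomial theorem with all variables but one specialised to `1`; it is the generating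
polynomial of the load of bin `i`, up to the factor `k ^ n`. -/
lemma multinomial_gen (k n : ℕ) (i : Fin k) :
    (Polynomial.X + Polynomial.C ((k : ℝ) - 1)) ^ n =
      ∑ α ∈ Finset.Nat.antidiagonalTuple k n,
        Polynomial.C ((n.factorial : ℝ) / ∏ j, ((α j).factorial : ℝ)) *
          (Polynomial.X : Polynomial ℝ) ^ (α i) := by
  have h := Finset.sum_pow_eq_sum_piAntidiag (Finset.univ : Finset (Fin k))
    (fun j => if j = i then (Polynomial.X : Polynomial ℝ) else 1) n
  have e : Finset.piAntidiag (Finset.univ : Finset (Fin k)) n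
      = Finset.Nat.antidiagonalTuple k n := by
    ext α
    simp [Finset.mem_piAntidiag, Finset.Nat.mem_antidiagonalTuple]
  have e1 : (∑ j : Fin k, if j = i then (Polynomial.X : Polynomial ℝ) else 1)
      = Polynomial.X + Polynomial.C ((k : ℝ) - 1) := by
    rw [← Finset.add_sum_erase _ _ (Finset.mem_univ i)]
    rw [Finset.sum_congr rfl (g := fun _ => (1 : Polynomial ℝ))
      (fun j hj => by simp [Finset.ne_of_mem_erase hj])]
    have : 1 ≤ k := by have := i.2; omega
    simp [Finset.card_erase_of_mem, Nat.cast_sub this]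
  rw [e1, e] at h
  rw [h]
  refine Finset.sum_congr rfl fun α hα => ?_
  rw [Finset.Nat.mem_antidiagonalTuple] at hα
  congr 1
  · rw [Nat.multinomial, hα, ← Polynomial.C_eq_natCast]
    rw [Nat.cast_div, Nat.cast_prod]
    · rw [← hα]; exact Nat.prod_factorial_dvd_factorial_sum _ _
    · exact_mod_cast Finset.prod_ne_zero_iff.2 fun j _ => Nat.factorial_ne_zero _
  · simp [ite_pow, Finset.prod_ite_eq']

/-- The multinomial probability of the load vector `α`. -/
noncomputable def loadWeight (k n : ℕ) (α : Fin k → ℕ) : ℝ :=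
  ((n.factorial : ℝ) / ∏ j, ((α j).factorial : ℝ)) * ((1 : ℝ) / (k : ℝ) ^ n)

lemma loadWeight_nonneg (k n : ℕ) (α : Fin k → ℕ) : 0 ≤ loadWeight k n α := by
  unfold loadWeight; positivity

lemma sum_loadWeight (k n : ℕ) (hk : 2 ≤ k) :
    ∑ α ∈ Finset.Nat.antidiagonalTuple k n, loadWeight k n α = 1 := by
  have h := congrArg (Polynomial.eval 1) (multinomial_gen k n ⟨0, by omega⟩)
  simp [Polynomial.eval_finsetSum] at h
  unfold loadWeight
  rw [← Finset.sum_mul, ← h]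
  have : (k : ℝ) ≠ 0 := by positivity
  field_simp

/-- Obtained by differentiating the generating polynomial twice at `1`. -/
lemma sum_loadWeight_coord (k n : ℕ) (hk : 2 ≤ k) (hn : 2 ≤ n) (i : Fin k) :
    ∑ α ∈ Finset.Nat.antidiagonalTuple k n,
      loadWeight k n α * ((α i : ℝ) * ((α i : ℝ) - 1)) = n * (n - 1) / (k : ℝ) ^ 2 := by
  have h := congrArg (fun p => Polynomial.eval 1 (Polynomial.derivative (Polynomial.derivative p)))
    (multinomial_gen k n i)
  obtain ⟨m, rfl⟩ : ∃ m, n = m + 2 := ⟨n - 2, by omega⟩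
  have cast_pred : ∀ a : ℕ, (a : ℝ) * ((a - 1 : ℕ) : ℝ) = a * ((a : ℝ) - 1) := by
    intro a; cases a <;> simp
  have k0 : (k : ℝ) ≠ 0 := by positivity
  simp [Polynomial.eval_finsetSum, Polynomial.derivative_pow, cast_pred] at h
  have h2 : ∑ α ∈ Finset.Nat.antidiagonalTuple k (m + 2),
      loadWeight k (m + 2) α * ((α i : ℝ) * ((α i : ℝ) - 1)) =
      (∑ α ∈ Finset.Nat.antidiagonalTuple k (m + 2),
        (((m + 2).factorial : ℝ) / ∏ j, ((α j).factorial : ℝ)) *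
          ((α i : ℝ) * ((α i : ℝ) - 1))) * (1 / (k : ℝ) ^ (m + 2)) := by
    rw [Finset.sum_mul]
    refine Finset.sum_congr rfl fun α _ => ?_
    unfold loadWeight; ring
  rw [h2, ← h]
  push_cast
  field_simp
  ring

lemma sum_weight_mul_factorial_moment (k n : ℕ) (hk : 2 ≤ k) (hn : 2 ≤ n) :
    ∑ α ∈ Finset.Nat.antidiagonalTuple k n,
      loadWeight k n α * ∑ i, ((α i : ℝ) * ((α i : ℝ) - 1)) = n * (n - 1) / (k : ℝ) := by
  have k0 : (k : ℝ) ≠ 0 := by positivity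
  simp_rw [Finset.mul_sum]
  rw [Finset.sum_comm]
  simp_rw [sum_loadWeight_coord k n hk hn]
  simp
  field_simp

lemma expect_le_of_quadratic (k n : ℕ) (hk : 2 ≤ k) (hn : 2 ≤ n) (w : ℕ → ℝ) (a b : ℝ)
    (hw : ∀ m ≤ n, w m ≤ a * m + b * ((m : ℝ) * ((m : ℝ) - 1))) :
    ∑ α ∈ Finset.Nat.antidiagonalTuple k n, loadWeight k n α * ∑ i, w (α i) ≤
      a * n + b * (n * (n - 1) / (k : ℝ)) := by
  calc _ ≤ ∑ α ∈ Finset.Nat.antidiagonalTuple k n, loadWeight k n α *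
        (a * n + b * ∑ i, ((α i : ℝ) * ((α i : ℝ) - 1))) := by
        refine Finset.sum_le_sum fun α hα => ?_
        refine mul_le_mul_of_nonneg_left ?_ (loadWeight_nonneg _ _ _)
        rw [Finset.Nat.mem_antidiagonalTuple] at hα
        have hc : (n : ℝ) = ∑ i, (α i : ℝ) := by rw [← hα]; push_cast; rfl
        rw [hc, Finset.mul_sum, Finset.mul_sum, ← Finset.sum_add_distrib]
        refine Finset.sum_le_sum fun i _ => hw _ ?_
        rw [← hα]
        exact Finset.single_le_sum (fun _ _ => Nat.zero_le _) (Finset.mem_univ i)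
    _ = (a * n) * ∑ α ∈ Finset.Nat.antidiagonalTuple k n, loadWeight k n α +
        b * ∑ α ∈ Finset.Nat.antidiagonalTuple k n,
          loadWeight k n α * ∑ i, ((α i : ℝ) * ((α i : ℝ) - 1)) := by
        rw [Finset.mul_sum, Finset.mul_sum, ← Finset.sum_add_distrib]
        refine Finset.sum_congr rfl fun α _ => ?_
        ring
    _ = _ := by
        rw [sum_loadWeight k n hk, sum_weight_mul_factorial_moment k n hk hn, mul_one]

/-- Tangent line of `log₂` at `t`, multiplied by `m`. -/
lemma mul_logb_le_tangent (m : ℕ) (t : ℝ) (ht : 0 < t) :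
    (m : ℝ) * Real.logb 2 m ≤
      (Real.logb 2 t + (1 / t - 1) / Real.log 2) * m
        + 1 / (t * Real.log 2) * ((m : ℝ) * ((m : ℝ) - 1)) := by
  rcases Nat.eq_zero_or_pos m with rfl | hm
  · simp
  have hm' : (0 : ℝ) < m := by exact_mod_cast hm
  have l2 : 0 < Real.log 2 := Real.log_pos (by norm_num)
  have h := Real.log_le_sub_one_of_pos (div_pos hm' ht)
  rw [Real.log_div hm'.ne' ht.ne'] at h
  have h2 : Real.logb 2 m ≤ Real.logb 2 t + (m / t - 1) / Real.log 2 := by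
    unfold Real.logb
    rw [← add_div]
    exact div_le_div_of_nonneg_right (by linarith) l2.le
  calc (m : ℝ) * Real.logb 2 m ≤ m * (Real.logb 2 t + (m / t - 1) / Real.log 2) :=
        mul_le_mul_of_nonneg_left h2 hm'.le
    _ = _ := by field_simp; ring

/-- One throw into `k < n` bins multiplies the mean size-biased load by at most `k ^ (-1/4)`. -/
lemma k_mul_pow_four_le (k n : ℕ) (hk : 2 ≤ k) (hkn : k < n) :
    (k : ℝ) * (1 + (n - 1) / k) ^ 4 ≤ (n : ℝ) ^ 4 := by
  have hk' : (2 : ℝ) ≤ k := by exact_mod_cast hk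
  have hkn' : (k : ℝ) ≤ n := by exact_mod_cast hkn.le
  have k0 : (0 : ℝ) < k := by linarith
  have h1 : (1 + ((n : ℝ) - 1) / k) ≤ n * ((2 * k - 1) / k ^ 2) := by
    have : n * ((2 * (k : ℝ) - 1) / k ^ 2) - (1 + ((n : ℝ) - 1) / k)
        = (n - k) * (k - 1) / k ^ 2 := by
      field_simp; ring
    have h0 : 0 ≤ ((n : ℝ) - k) * (k - 1) / k ^ 2 :=
      div_nonneg (mul_nonneg (by linarith) (by linarith)) (by positivity)
    linarith
  have h0 : 0 ≤ 1 + ((n : ℝ) - 1) / k := by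
    have : 0 ≤ ((n : ℝ) - 1) / k := div_nonneg (by linarith) k0.le
    linarith
  have h2 : (2 * (k : ℝ) - 1) ^ 4 ≤ k ^ 7 := by
    rcases Nat.lt_or_ge k 3 with h | h
    · obtain rfl : k = 2 := by omega
      norm_num
    · have h3 : (3 : ℝ) ≤ k := by exact_mod_cast h
      calc (2 * (k : ℝ) - 1) ^ 4 ≤ (2 * k) ^ 4 :=
            pow_le_pow_left₀ (by linarith) (by linarith) 4
        _ = 16 * k ^ 4 := by ring
        _ ≤ k ^ 3 * k ^ 4 := by
            refine mul_le_mul_of_nonneg_right ?_ (by positivity)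
            calc (16 : ℝ) ≤ 3 ^ 3 := by norm_num
              _ ≤ _ := pow_le_pow_left₀ (by norm_num) h3 3
        _ = k ^ 7 := by ring
  calc (k : ℝ) * (1 + (n - 1) / k) ^ 4 ≤ k * (n * ((2 * k - 1) / k ^ 2)) ^ 4 :=
        mul_le_mul_of_nonneg_left (pow_le_pow_left₀ h0 h1 4) k0.le
    _ = n ^ 4 * ((2 * k - 1) ^ 4 / k ^ 7) := by field_simp
    _ ≤ n ^ 4 * 1 :=
        mul_le_mul_of_nonneg_left ((div_le_one (by positivity)).2 h2) (by positivity)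
    _ = _ := mul_one _

/-- Random-bit upper bound: if `W` is nonnegative, vanishes for multiplicities `0`
and `1`, is superadditive (`Σᵢ W(αᵢ,N) ≤ W(n,N)` whenever `Σᵢ αᵢ = n ≤ N`), and
satisfies the one-round recursion with a polynomially bounded number `k ≤ A·N^K` of
destinations, then there are reals `R, R'` with
`W(n,N) ≤ R·n·log₂ n + R'·n·log₂ N` for all `2 ≤ n ≤ N`. -/
theorem stmt_13 (A K : ℕ) (hA : 1 ≤ A) (hK : 1 ≤ K) (W : ℕ → ℕ → ℝ)
    (hnonneg : ∀ n N : ℕ, 0 ≤ W n N)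
    (hW0 : ∀ N : ℕ, W 0 N = 0) (hW1 : ∀ N : ℕ, W 1 N = 0)
    (hsuper : ∀ N : ℕ, ∀ k : ℕ, ∀ α : Fin k → ℕ, (∑ i, α i) ≤ N →
      ∑ i, W (α i) N ≤ W (∑ i, α i) N)
    (hrec : ∀ N : ℕ, 2 ≤ N → ∀ n : ℕ, 2 ≤ n → n ≤ N →
      ∃ k : ℕ, 2 ≤ k ∧ k ≤ A * N ^ K ∧
        W n N ≤ (n : ℝ) * Real.logb 2 k +
          ∑ α ∈ Finset.Nat.antidiagonalTuple k n,
            ((n.factorial : ℝ) / ∏ i, ((α i).factorial : ℝ)) * ((1 : ℝ) / (k : ℝ) ^ n) *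
              (∑ i, W (α i) N)) :
    ∃ R R' : ℝ, ∀ N : ℕ, 2 ≤ N → ∀ n : ℕ, 2 ≤ n → n ≤ N →
      W n N ≤ R * (n : ℝ) * Real.logb 2 n + R' * (n : ℝ) * Real.logb 2 N := by
  have hlA : 0 ≤ Real.logb 2 A :=
    Real.logb_nonneg (by norm_num) (by exact_mod_cast hA)
  refine ⟨4, 4 * (Real.logb 2 A + K), fun N hN => ?_⟩
  set D : ℝ := 4 * (Real.logb 2 A + K) with hD
  have hD0 : 0 ≤ D := by positivity
  set L : ℝ := Real.logb 2 N with hL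
  have hL1 : 1 ≤ L := by
    rw [hL, Real.le_logb_iff_rpow_le (by norm_num) (by positivity)]
    simpa using (by exact_mod_cast hN : (2 : ℝ) ≤ N)
  have main : ∀ n : ℕ, 2 ≤ n → n ≤ N →
      W n N ≤ 4 * (n * Real.logb 2 n) + D * L * (n - 1) := by
    intro n
    induction n using Nat.strong_induction_on with
    | _ n ih =>
    intro hn hnN
    obtain ⟨k, hk, hkN, hr⟩ := hrec N hN n hn hnN
    change W n N ≤ (n : ℝ) * Real.logb 2 k + ∑ α ∈ Finset.Nat.antidiagonalTuple k n,
      loadWeight k n α * (∑ i, W (α i) N) at hr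
    by_contra! hcon
    set δ : ℝ := W n N - (4 * (n * Real.logb 2 n) + D * L * (n - 1)) with hδ
    have hδ0 : 0 < δ := by rw [hδ]; linarith
    have hn' : (2 : ℝ) ≤ n := by exact_mod_cast hn
    have hk' : (2 : ℝ) ≤ k := by exact_mod_cast hk
    have k0 : (0 : ℝ) < k := by linarith
    have nn0 : 0 < (n : ℝ) * (n - 1) := mul_pos (by linarith) (by linarith)
    have hδk : δ / k ≤ δ / 2 := div_le_div_of_nonneg_left hδ0.le (by norm_num) hk'
    have DL : 0 ≤ D * L := mul_nonneg hD0 (by linarith)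
    -- the induction hypothesis and the definition of `δ`, in one inequality valid up to `n`
    have hbound : ∀ m : ℕ, 1 ≤ m → m ≤ n →
        W m N ≤ 4 * (m * Real.logb 2 m) + D * L * (m - 1)
          + δ / (n * (n - 1)) * ((m : ℝ) * ((m : ℝ) - 1)) := by
      intro m hm1 hmn
      have hm' : (1 : ℝ) ≤ m := by exact_mod_cast hm1
      have hpos : 0 ≤ δ / (n * (n - 1)) * ((m : ℝ) * ((m : ℝ) - 1)) :=
        mul_nonneg (div_nonneg hδ0.le nn0.le) (mul_nonneg (by linarith) (by linarith))
      rcases hmn.lt_or_eq with h | rfl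
      · rcases Nat.lt_or_ge m 2 with h2 | h2
        · obtain rfl : m = 1 := by omega
          simp [hW1]
        · have := ih m h h2 (by omega)
          linarith
      · rw [div_mul_cancel₀ _ nn0.ne', hδ]
        linarith
    rcases le_or_gt n k with hnk | hkn
    · have hnk' : (n : ℝ) ≤ k := by exact_mod_cast hnk
      have hE := expect_le_of_quadratic k n hk hn (fun m => W m N) (4 * Real.logb 2 n)
        (D * L / 2 + δ / (n * (n - 1))) (by
          intro m hmn
          rcases Nat.eq_zero_or_pos m with rfl | hm
          · simp [hW0]
          have hm' : (1 : ℝ) ≤ m := by exact_mod_cast hm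
          have hmn' : (m : ℝ) ≤ n := by exact_mod_cast hmn
          have h1 := hbound m hm hmn
          have h2 : (m : ℝ) * Real.logb 2 m ≤ m * Real.logb 2 n :=
            mul_le_mul_of_nonneg_left
              (Real.logb_le_logb_of_le (by norm_num) (by linarith) hmn') (by linarith)
          have h3 : (m : ℝ) - 1 ≤ m * (m - 1) / 2 := by
            rcases Nat.lt_or_ge m 2 with h | h
            · obtain rfl : m = 1 := by omega
              norm_num
            · have : (2 : ℝ) ≤ m := by exact_mod_cast h
              nlinarith
          have h4 := mul_le_mul_of_nonneg_left h3 DL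
          show W m N ≤ _
          linarith)
      have e1 : (D * L / 2 + δ / (n * (n - 1))) * (n * (n - 1) / (k : ℝ))
          = D * L / 2 * (n - 1) * (n / k) + δ / k := by
        have : (n : ℝ) - 1 ≠ 0 := by linarith
        field_simp
      have e2 : D * L / 2 * (n - 1) * (n / k) ≤ D * L / 2 * (n - 1) * 1 :=
        mul_le_mul_of_nonneg_left ((div_le_one k0).2 hnk')
          (mul_nonneg (by linarith) (by linarith))
      have e3 : Real.logb 2 k ≤ Real.logb 2 A + K * L := by
        have hA' : (A : ℝ) ≠ 0 := by positivity
        have hN' : (N : ℝ) ≠ 0 := by positivity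
        rw [hL, ← Real.logb_pow, ← Real.logb_mul hA' (pow_ne_zero _ hN')]
        exact Real.logb_le_logb_of_le (by norm_num) k0 (by exact_mod_cast hkN)
      have e4 : Real.logb 2 k ≤ D * L / 4 := by
        rw [hD]; nlinarith
      have e5 : (n : ℝ) * Real.logb 2 k ≤ n * (D * L / 4) :=
        mul_le_mul_of_nonneg_left e4 (by linarith)
      have e6 : (n : ℝ) * (D * L / 4) ≤ D * L / 2 * (n - 1) := by nlinarith
      rw [e1] at hE
      linarith
    · set t : ℝ := 1 + (n - 1) / k with ht
      have ht0 : 0 < t := by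
        have : 0 ≤ ((n : ℝ) - 1) / k := div_nonneg (by linarith) k0.le
        linarith
      have l2 : 0 < Real.log 2 := Real.log_pos (by norm_num)
      have hE := expect_le_of_quadratic k n hk hn (fun m => W m N)
        (4 * (Real.logb 2 t + (1 / t - 1) / Real.log 2) + D * L * ((n - 1) / n))
        (4 * (1 / (t * Real.log 2)) + δ / (n * (n - 1))) (by
          intro m hmn
          rcases Nat.eq_zero_or_pos m with rfl | hm
          · simp [hW0]
          have hmn' : (m : ℝ) ≤ n := by exact_mod_cast hmn
          have h1 := hbound m hm hmn
          have h2 := mul_logb_le_tangent m t ht0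
          have h3 : (m : ℝ) - 1 ≤ (n - 1) / n * m := by
            rw [div_mul_eq_mul_div, le_div_iff₀ (by linarith)]
            linarith
          have h4 := mul_le_mul_of_nonneg_left h3 DL
          show W m N ≤ _
          linarith)
      have e1 : (4 * (Real.logb 2 t + (1 / t - 1) / Real.log 2) + D * L * ((n - 1) / n)) * n
          + (4 * (1 / (t * Real.log 2)) + δ / (n * (n - 1))) * (n * (n - 1) / (k : ℝ))
          = 4 * (n * Real.logb 2 t) + D * L * (n - 1) + δ / k := by
        have hn1 : (n : ℝ) - 1 ≠ 0 := by linarith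
        have hs : ((n : ℝ) - 1) / k = t - 1 := by rw [ht]; ring
        have hd : δ / (n * (n - 1)) * (n * (n - 1) / (k : ℝ)) = δ / k := by
          field_simp
        rw [add_mul (4 * (1 / (t * Real.log 2))), hd, mul_div_assoc, hs]
        field_simp
        ring
      have e2 : Real.logb 2 k + 4 * Real.logb 2 t ≤ 4 * Real.logb 2 n := by
        have := Real.logb_le_logb_of_le (b := 2) (by norm_num) (by positivity)
          (k_mul_pow_four_le k n hk hkn)
        rw [← ht, Real.logb_mul k0.ne' (pow_ne_zero _ ht0.ne'), Real.logb_pow,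
          Real.logb_pow] at this
        exact_mod_cast this
      have e3 := mul_le_mul_of_nonneg_left e2 (by linarith : (0 : ℝ) ≤ n)
      rw [e1] at hE
      linarith
  intro n hn hnN
  have h := main n hn hnN
  have : 0 ≤ D * L := mul_nonneg hD0 (by linarith)
  linarith
end

section
/- Let N ≥ n ≥ 17 be integers, let R ≥ 17 and R' ≥ 0 be reals, and let W : {0,1,…,n} → ℝ be nonnegative and nondecreasing with W(0) = W(1) = 0. Assume W(m) ≤ m·R·log₂ m + m·R'·log₂ N for all m < n, and W(n) ≤ n + 2^{−n}·Σ_{m=0}^{n} C(n,m)·(W(m) + W(n−m)). Then W(n) ≤ n·R·log₂ n + n·R'·log₂ N. -/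
/-!
Write `B m = m·R·log₂ m + m·R'·log₂ N`. The inequality `log x ≤ x - 1` gives
`log₂ m ≤ log₂ n - (n - m)/n` for `1 ≤ m ≤ n`, so for `0 < m < n` the two groups together cost at
most `B m + B (n - m) ≤ B n - 2R·m(n - m)/n`. The two degenerate splits `m = 0` and `m = n` cost
`W n = B n + (W n - B n)`. Averaging over the binomial distribution, for which
`E[m(n - m)] = n(n - 1)/4`, the recursion becomes
`(1 - 2/2ⁿ)·(W n - B n) ≤ n - R(n - 1)/2`, and the right-hand side is negative for `n, R ≥ 17`.
-/

/-- The moment `E[m(n - m)] = n(n - 1)/4` of the binomial distribution, with `n = k + 2` and the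
denominators cleared. -/
lemma sum_choose_mul_mul_sub (k : ℕ) :
    ∑ m ∈ Finset.range (k + 2 + 1),
      ((k + 2).choose m : ℝ) * ((m : ℝ) * (((k + 2 : ℕ) : ℝ) - m)) =
      ((k : ℝ) + 2) * (k + 1) * 2 ^ k := by
  have key : ∀ m ∈ Finset.range (k + 1),
      ((k + 2).choose (m + 1) : ℝ) * (((m + 1 : ℕ) : ℝ) * (((k + 2 : ℕ) : ℝ) - ((m + 1 : ℕ) : ℝ))) =
      ((k : ℝ) + 2) * (k + 1) * (k.choose m : ℝ) := by
    intro m hm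
    have hm' : m ≤ k := by simpa [Nat.lt_succ_iff] using hm
    have h1 := Nat.add_one_mul_choose_eq (k + 1) m
    have h2 := Nat.choose_mul_succ_eq k m
    have h1' : ((k : ℝ) + 1 + 1) * ((k + 1).choose m : ℝ)
        = ((k + 2).choose (m + 1) : ℝ) * ((m : ℝ) + 1) := by exact_mod_cast h1
    have h2' : (k.choose m : ℝ) * ((k : ℝ) + 1) = ((k + 1).choose m : ℝ) * ((k : ℝ) + 1 - m) := by
      have h3 : ((k + 1 - m : ℕ) : ℝ) = (k : ℝ) + 1 - m := by
        rw [Nat.cast_sub (by omega)]; push_cast; ring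
      rw [← h3]; exact_mod_cast h2
    push_cast
    linear_combination (-((k : ℝ) + 1 - m)) * h1' - ((k : ℝ) + 2) * h2'
  have hs : ∑ m ∈ Finset.range (k + 1), (k.choose m : ℝ) = 2 ^ k := by
    exact_mod_cast Nat.sum_range_choose k
  -- The two extreme terms vanish.
  rw [Finset.sum_range_succ, Finset.sum_range_succ', Finset.sum_congr rfl key, ← Finset.mul_sum, hs]
  simp

lemma logb_two_le_sub (m n : ℕ) (hm : 0 < m) (hmn : m ≤ n) :
    Real.logb 2 m ≤ Real.logb 2 n - ((n : ℝ) - m) / n := by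
  have hm0 : (0 : ℝ) < m := by exact_mod_cast hm
  have hmn' : (m : ℝ) ≤ n := by exact_mod_cast hmn
  have hn0 : (0 : ℝ) < n := hm0.trans_le hmn'
  have hl : 0 < Real.log 2 := Real.log_pos one_lt_two
  have hl1 : Real.log 2 ≤ 1 := by
    have := Real.log_two_lt_d9
    linarith
  have h1 : Real.log m - Real.log n ≤ m / n - 1 := by
    rw [← Real.log_div hm0.ne' hn0.ne']
    exact Real.log_le_sub_one_of_pos (by positivity)
  have h2 : (0 : ℝ) ≤ 1 - m / n := by
    rw [sub_nonneg, div_le_one hn0]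
    exact hmn'
  have h3 : ((n : ℝ) - m) / n = 1 - m / n := by
    field_simp
  rw [h3, Real.logb, Real.logb, div_le_iff₀ hl, sub_mul, div_mul_cancel₀ _ hl.ne']
  nlinarith

/-- The case `k = 2` of the random-bit upper bound: for `17 ≤ n ≤ N`, `R ≥ 17`,
`R' ≥ 0`, if `W` is nonnegative and nondecreasing on `{0,…,n}` with `W 0 = W 1 = 0`,
satisfies the induction hypothesis `W m ≤ m·R·log₂ m + m·R'·log₂ N` for `m < n`, and
the recursion `W n ≤ n + 2^{−n}·Σ_{m=0}^{n} C(n,m)(W m + W (n−m))`, then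
`W n ≤ n·R·log₂ n + n·R'·log₂ N`. -/
theorem stmt_14 (N n : ℕ) (hn : 17 ≤ n) (hnN : n ≤ N) (R R' : ℝ) (hR : 17 ≤ R)
    (hR' : 0 ≤ R') (W : ℕ → ℝ)
    (hnonneg : ∀ m : ℕ, m ≤ n → 0 ≤ W m)
    (hmono : ∀ m m' : ℕ, m ≤ m' → m' ≤ n → W m ≤ W m')
    (hW0 : W 0 = 0) (hW1 : W 1 = 0)
    (hind : ∀ m : ℕ, m < n →
      W m ≤ (m : ℝ) * R * Real.logb 2 m + (m : ℝ) * R' * Real.logb 2 N)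
    (hrec : W n ≤ (n : ℝ) +
      (1 / 2 ^ n : ℝ) * ∑ m ∈ Finset.range (n + 1), (n.choose m : ℝ) * (W m + W (n - m))) :
    W n ≤ (n : ℝ) * R * Real.logb 2 n + (n : ℝ) * R' * Real.logb 2 N := by
  set L := Real.logb 2 (N : ℝ)
  set B : ℝ := (n : ℝ) * R * Real.logb 2 n + (n : ℝ) * R' * L with hB
  have hn17 : (17 : ℝ) ≤ n := by exact_mod_cast hn
  have hn0 : (0 : ℝ) < n := by linarith
  have hR0 : 0 ≤ R := by linarith
  have hmid : ∀ m : ℕ, 0 < m → m < n →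
      W m + W (n - m) ≤ B - 2 * R / n * ((m : ℝ) * ((n : ℝ) - m)) := by
    intro m hm hmn
    have h1 := hind m hmn
    have h2 := hind (n - m) (by omega)
    have g1 := logb_two_le_sub m n hm hmn.le
    have g2 := logb_two_le_sub (n - m) n (by omega) (by omega)
    rw [Nat.cast_sub hmn.le] at h2 g2
    have hm0 : (0 : ℝ) ≤ m := m.cast_nonneg
    have hmn0 : (0 : ℝ) ≤ (n : ℝ) - m := by
      rw [sub_nonneg]
      exact_mod_cast hmn.le
    have e1 := mul_le_mul_of_nonneg_left g1 (mul_nonneg hm0 hR0)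
    have e2 := mul_le_mul_of_nonneg_left g2 (mul_nonneg hmn0 hR0)
    have e3 : (m : ℝ) * R * (Real.logb 2 n - ((n : ℝ) - m) / n) + (m : ℝ) * R' * L +
        (((n : ℝ) - m) * R * (Real.logb 2 n - ((n : ℝ) - ((n : ℝ) - m)) / n) +
          ((n : ℝ) - m) * R' * L) = B - 2 * R / n * ((m : ℝ) * ((n : ℝ) - m)) := by
      rw [hB]
      ring
    linarith
  -- The excess `W n - B` is charged to the two degenerate splits only.
  have hterm : ∀ m ∈ Finset.range (n + 1), (n.choose m : ℝ) * (W m + W (n - m)) ≤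
      (n.choose m : ℝ) * B - 2 * R / n * ((n.choose m : ℝ) * ((m : ℝ) * ((n : ℝ) - m))) +
        ((if m = 0 then W n - B else 0) + (if m = n then W n - B else 0)) := by
    intro m hm
    have hmn : m ≤ n := by simpa [Nat.lt_succ_iff] using hm
    rcases Nat.eq_zero_or_pos m with rfl | hpos
    · have : (0 : ℕ) ≠ n := by omega
      simp [hW0, this]
    rcases hmn.eq_or_lt with rfl | hlt
    · simp [hW0, hpos.ne']
    · have h := mul_le_mul_of_nonneg_left (hmid m hpos hlt) (Nat.cast_nonneg (α := ℝ) (n.choose m))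
      rw [if_neg hpos.ne', if_neg hlt.ne]
      linarith
  have hsum := Finset.sum_le_sum hterm
  have hchoose : ∑ m ∈ Finset.range (n + 1), (n.choose m : ℝ) = 2 ^ n := by
    exact_mod_cast Nat.sum_range_choose n
  have hmom : ∑ m ∈ Finset.range (n + 1), (n.choose m : ℝ) * ((m : ℝ) * ((n : ℝ) - m)) =
      (n : ℝ) * (n - 1) / 4 * 2 ^ n := by
    obtain ⟨k, rfl⟩ := Nat.exists_eq_add_of_le' (show 2 ≤ n by omega)
    rw [sum_choose_mul_mul_sub]
    push_cast
    ring
  rw [Finset.sum_add_distrib, Finset.sum_sub_distrib, ← Finset.sum_mul, ← Finset.mul_sum, hchoose,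
    hmom, Finset.sum_add_distrib, Finset.sum_ite_eq', Finset.sum_ite_eq', if_pos (by simp),
    if_pos (by simp)] at hsum
  have hp : (4 : ℝ) ≤ 2 ^ n := by
    calc (4 : ℝ) = 2 ^ 2 := by norm_num
      _ ≤ 2 ^ n := pow_le_pow_right₀ one_le_two (by omega)
  have hp0 : (0 : ℝ) < 2 ^ n := by positivity
  have h1 := mul_le_mul_of_nonneg_left hsum (one_div_pos.mpr hp0).le
  have h2 : (1 / 2 ^ n : ℝ) * (2 ^ n * B - 2 * R / n * ((n : ℝ) * (n - 1) / 4 * 2 ^ n) +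
      (W n - B + (W n - B))) = B - R * (n - 1) / 2 + 2 / 2 ^ n * (W n - B) := by
    field_simp
    ring
  rw [h2] at h1
  have hq : (2 : ℝ) / 2 ^ n ≤ 1 / 2 := by
    rw [div_le_iff₀ hp0]
    linarith
  have hdrift : (n : ℝ) - R * (n - 1) / 2 < 0 := by nlinarith
  by_contra! hcon
  nlinarith [mul_le_mul_of_nonneg_right hq (sub_pos.mpr hcon).le]
end
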